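/- arXiv:2409.06849 — 2 statements merged into one kernel-verified Lean document; each statement's English description precedes it below -/
import Mathlib

section
/- Let d ≥ 3 and fix k ∈ {0,…,d−1}. For n ∈ ℕ let w_n be the middle component of f^n(T_{d−1−k}) and let w⃗_n ∈ ℕ^d be its Parikh vector. Then w⃗_{n+1} = M w⃗_n + ℓ_n^{(k)}, where M is the incidence matrix of φ_d and: for 1 ≤ k ≤ d−2, ℓ_n^{(k)} = e_0 + e_{d−1} if n ≡ k−1 (mod d−1) or n ≡ d−2 (mod d−1), and ℓ_n^{(k)} = e_0 otherwise; for k = 0 and k = d−1, ℓ_n^{(k)} = e_0 + 2e_{d−1} if n ≡ d−2 (mod d−1), and ℓ_n^{(k)} = e_0 otherwise. -/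
namespace RichRT

variable {A : Type*}

/-- The word `w` occurs in the sequence `u` at position `j`. -/
def OccursAt (w : List A) (u : ℕ → A) (j : ℕ) : Prop :=
  w = (List.range w.length).map fun t => u (j + t)

/-- `w` is a factor of the infinite sequence `u`. -/
def IsFactorS (w : List A) (u : ℕ → A) : Prop :=
  ∃ j : ℕ, OccursAt w u j

/-- `u` is recurrent: every factor occurs infinitely often. -/
def Recurrent (u : ℕ → A) : Prop :=
  ∀ w : List A, IsFactorS w u → ∀ N : ℕ, ∃ j, N ≤ j ∧ OccursAt w u j

/-- The number of distinct palindromic factors of a finite word. -/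
noncomputable def palCount (w : List A) : ℕ :=
  Set.ncard {p : List A | p <:+: w ∧ p.reverse = p}

/-- A finite word of length `n` is rich if it has exactly `n+1` palindromic factors. -/
def RichWord (w : List A) : Prop := palCount w = w.length + 1

/-- A sequence is rich if all its factors are rich. -/
def RichSeq (u : ℕ → A) : Prop := ∀ w : List A, IsFactorS w u → RichWord w

/-- The prefix of length `k` of the periodic sequence `vvv⋯`. -/
def powPref (v : List A) (k : ℕ) : List A := ((List.replicate k v).flatten).take k

/-- The set of exponents `k/|v|` of fractional powers `v^(k/|v|)` occurring in `u`,
with `|v| ≥ n`. -/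
def expSet (u : ℕ → A) (n : ℕ) : Set ℝ :=
  {x | ∃ (v : List A) (k : ℕ), v ≠ [] ∧ n ≤ v.length ∧
    IsFactorS (powPref v k) u ∧ x = (k : ℝ) / (v.length : ℝ)}

/-- The critical exponent of a sequence, with values in `EReal`. -/
noncomputable def critExp (u : ℕ → A) : EReal :=
  sSup ((fun x : ℝ => (x : EReal)) '' expSet u 0)

/-- The asymptotic critical exponent of a sequence: `⊤` if the critical exponent is `⊤`,
otherwise the limit (= infimum, by monotonicity) over `n` of the suprema of exponents of
powers `v^e` with `|v| ≥ n`. -/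
noncomputable def acritExp (u : ℕ → A) : EReal :=
  if critExp u = ⊤ then ⊤
  else ⨅ n : ℕ, sSup ((fun x : ℝ => (x : EReal)) '' expSet u n)

/-- The morphism `φ_d` on letters: `i ↦ 0(i+1)` for `i < d-1`, `d-1 ↦ 0(d-1)(d-1)`. -/
def phiL (d : ℕ) (i : ℕ) : List ℕ :=
  if i < d - 1 then [0, i + 1] else [0, d - 1, d - 1]

/-- The morphism `φ_d` on words. -/
def phiW (d : ℕ) (w : List ℕ) : List ℕ := w.flatMap (phiL d)

/-- `u` is the fixed point of `φ_d`: it begins with `0` and `φ_d(u) = u`, i.e. the image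
of every prefix of `u` is again a prefix of `u`. -/
def IsPhiFixed (d : ℕ) (u : ℕ → ℕ) : Prop :=
  u 0 = 0 ∧ ∀ m : ℕ, OccursAt (phiW d ((List.range m).map u)) u 0

/-- Left extensions of `w` in `u`. -/
def Lext (u : ℕ → ℕ) (w : List ℕ) : Set (List ℕ) :=
  {x | ∃ i : ℕ, x = i :: w ∧ IsFactorS x u}

/-- Right extensions of `w` in `u`. -/
def Rext (u : ℕ → ℕ) (w : List ℕ) : Set (List ℕ) :=
  {x | ∃ i : ℕ, x = w ++ [i] ∧ IsFactorS x u}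

/-- Both-sided extensions of `w` in `u`. -/
def Bext (u : ℕ → ℕ) (w : List ℕ) : Set (List ℕ) :=
  {x | ∃ i j : ℕ, x = i :: (w ++ [j]) ∧ IsFactorS x u}

/-- `w` is a bispecial factor of `u`. -/
def Bispecial (u : ℕ → ℕ) (w : List ℕ) : Prop :=
  IsFactorS w u ∧ 2 ≤ (Lext u w).ncard ∧ 2 ≤ (Rext u w).ncard

/-- The bilateral order `b(w) = #Bext(w) − #Lext(w) − #Rext(w) + 1`. -/
noncomputable def bord (u : ℕ → ℕ) (w : List ℕ) : ℤ :=
  ((Bext u w).ncard : ℤ) - ((Lext u w).ncard : ℤ) - ((Rext u w).ncard : ℤ) + 1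

/-- The palindromes `F_0 = ε`, `F_i = φ(F_{i-1})0`. -/
def Fword (d : ℕ) : ℕ → List ℕ
  | 0 => []
  | i + 1 => phiW d (Fword d i) ++ [0]

/-- Membership in the set `𝒯` of bispecial triplets. -/
def TripleMem (d : ℕ) (u : ℕ → ℕ) (t : ℕ × List ℕ × ℕ) : Prop :=
  Bispecial u t.2.1 ∧ t.1 < d - 1 ∧ t.2.2 < d - 1 ∧
    IsFactorS (t.1 :: t.2.1) u ∧ IsFactorS (t.2.1 ++ [t.2.2]) u

/-- The map `f` on triplets. -/
def fmap (d : ℕ) (t : ℕ × List ℕ × ℕ) : ℕ × List ℕ × ℕ :=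
  ((t.1 + 1) % (d - 1),
   (if t.1 = d - 2 then [d - 1] else []) ++ phiW d t.2.1 ++ [0] ++
     (if t.2.2 = d - 2 then [d - 1] else []),
   (t.2.2 + 1) % (d - 1))

/-- The initial triplets `T_k = (0, ε, k)` for `k ≤ d-2` and `T_{d-1} = (0, d-1, 0)`. -/
def Tinit (d k : ℕ) : ℕ × List ℕ × ℕ :=
  if k = d - 1 then (0, [d - 1], 0) else (0, ([] : List ℕ), k)

/-- The Parikh vector of a word. -/
def parikh (d : ℕ) (w : List ℕ) : Fin d → ℕ := fun i => w.count (i : ℕ)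

/-- The incidence matrix of `φ_d`. -/
def Mmat (d : ℕ) : Matrix (Fin d) (Fin d) ℕ := fun i j => (phiL d (j : ℕ)).count (i : ℕ)

/-- `r` is a return word to `w` in `u`. -/
def ReturnWord (u : ℕ → ℕ) (w r : List ℕ) : Prop :=
  ∃ j ℓ : ℕ, j < ℓ ∧ OccursAt w u j ∧ OccursAt w u ℓ ∧
    (∀ m, j < m → m < ℓ → ¬ OccursAt w u m) ∧
    r = (List.range (ℓ - j)).map fun t => u (j + t)

/-- `R` is a complete return word to `w` in `u`. -/
def CompleteReturn (u : ℕ → ℕ) (w R : List ℕ) : Prop :=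
  ∃ r : List ℕ, ReturnWord u w r ∧ R = r ++ w

theorem count_phiW (d : ℕ) (i : Fin d) (w : List ℕ) (hw : ∀ x ∈ w, x < d) :
    (phiW d w).count (i : ℕ) = (Mmat d).mulVec (parikh d w) i := by
  induction w with
  | nil => simp [phiW, parikh, Matrix.mulVec, dotProduct]
  | cons a w ih =>
    have ih' := ih (fun x hx => hw x (List.mem_cons_of_mem _ hx))
    have ha : a < d := hw a (by simp)
    have h1 : phiW d (a :: w) = phiL d a ++ phiW d w := by simp [phiW]
    have h2 : parikh d (a :: w) = parikh d w + Pi.single (⟨a, ha⟩ : Fin d) 1 := by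
      funext j
      simp only [parikh, List.count_cons, Pi.add_apply, Pi.single_apply, Fin.ext_iff, beq_iff_eq]
      simp only [eq_comm]
    rw [h1, List.count_append, ih', h2, Matrix.mulVec_add, Matrix.mulVec_single_one]
    simp [Mmat, add_comm]

theorem phiW_lt (d : ℕ) (hd : 3 ≤ d) (w : List ℕ) : ∀ x ∈ phiW d w, x < d := by
  intro x hx
  simp only [phiW, List.mem_flatMap, phiL] at hx
  obtain ⟨a, -, hx⟩ := hx
  split_ifs at hx <;> simp at hx <;> omega

theorem iter_inv (d : ℕ) (hd : 3 ≤ d) (w : List ℕ) (hw : ∀ x ∈ w, x < d) (b : ℕ)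
    (hb : b < d - 1) (n : ℕ) :
    ((fmap d)^[n] (0, w, b)).1 = n % (d - 1) ∧
    (∀ x ∈ ((fmap d)^[n] (0, w, b)).2.1, x < d) ∧
    ((fmap d)^[n] (0, w, b)).2.2 = (b + n) % (d - 1) := by
  induction n with
  | zero => exact ⟨by simp, by simpa using hw, by simp [Nat.mod_eq_of_lt hb]⟩
  | succ n ih =>
    obtain ⟨h1, h2, h3⟩ := ih
    rw [Function.iterate_succ_apply']
    refine ⟨by simp [fmap, h1], ?_, by simp [fmap, h3, add_assoc]⟩
    intro x hx
    simp only [fmap, List.mem_append] at hx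
    rcases hx with ((hx | hx) | hx) | hx
    · split_ifs at hx <;> simp at hx; omega
    · exact phiW_lt d hd _ x hx
    · simp at hx; omega
    · split_ifs at hx <;> simp at hx; omega

theorem step (d : ℕ) (hd : 3 ≤ d) (w : List ℕ) (hw : ∀ x ∈ w, x < d) (b : ℕ)
    (hb : b < d - 1) (n : ℕ) (i : Fin d) :
    parikh d ((fmap d)^[n + 1] (0, w, b)).2.1 i =
      (Mmat d).mulVec (parikh d ((fmap d)^[n] (0, w, b)).2.1) i +
      ((if (i : ℕ) = 0 then 1 else 0) + (if (i : ℕ) = d - 1 then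
        (if n % (d - 1) = d - 2 then 1 else 0) +
          (if (b + n) % (d - 1) = d - 2 then 1 else 0) else 0)) := by
  obtain ⟨h1, h2, h3⟩ := iter_inv d hd w hw b hb n
  rw [Function.iterate_succ_apply', ← count_phiW d i _ h2]
  simp only [parikh, fmap, h1, h3, List.count_append]
  have e : ∀ (p : Prop) [Decidable p], List.count (i : ℕ) (if p then [d - 1] else []) =
      if (i : ℕ) = d - 1 then (if p then 1 else 0) else 0 := by
    intro p _
    by_cases hp : p <;> simp only [hp, if_true, if_false, List.count_singleton, List.count_nil, beq_iff_eq, ite_self, eq_comm (a := d - 1)]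
  rw [e, e, List.count_singleton]
  simp only [beq_iff_eq, eq_comm (a := 0)]
  split_ifs <;> omega

/-- Let `d ≥ 3` and `k ≤ d−1`. For `w_n` the middle component of
`f^n(T_{d−1−k})`, the Parikh vectors satisfy `w⃗_{n+1} = M w⃗_n + ℓ_n^{(k)}`, where `M`
is the incidence matrix of `φ_d` and `ℓ_n^{(k)}` is as follows: for `1 ≤ k ≤ d−2` it is
`e_0 + e_{d−1}` if `n ≡ k−1` or `n ≡ d−2 (mod d−1)` and `e_0` otherwise; for `k = 0` and
`k = d−1` it is `e_0 + 2e_{d−1}` if `n ≡ d−2 (mod d−1)` and `e_0` otherwise. -/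
theorem statement12 (d : ℕ) (hd : 3 ≤ d) (u : ℕ → ℕ) (hu : IsPhiFixed d u)
    (k : ℕ) (hk : k ≤ d - 1) (n : ℕ) :
    parikh d ((fmap d)^[n + 1] (Tinit d (d - 1 - k))).2.1 =
      (Mmat d).mulVec (parikh d ((fmap d)^[n] (Tinit d (d - 1 - k))).2.1) +
      (fun i : Fin d =>
        (if (i : ℕ) = 0 then 1 else 0) +
        (if (i : ℕ) = d - 1 then
          (if 1 ≤ k ∧ k ≤ d - 2 then
            (if n % (d - 1) = k - 1 ∨ n % (d - 1) = d - 2 then 1 else 0)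
          else
            (if n % (d - 1) = d - 2 then 2 else 0))
        else 0)) := by
  funext i
  simp only [Pi.add_apply]
  by_cases hk0 : k = 0
  · subst hk0
    have : Tinit d (d - 1 - 0) = (0, [d - 1], 0) := by simp [Tinit]
    rw [this, step d hd [d - 1] (by simp; omega) 0 (by omega) n i]
    simp only [Nat.zero_add]
    split_ifs <;> omega
  · have : Tinit d (d - 1 - k) = (0, [], d - 1 - k) := by
      rw [Tinit, if_neg (by omega)]
    rw [this, step d hd [] (by simp) (d - 1 - k) (by omega) n i]
    congr 2
    have key : (d - 1 - k + n) % (d - 1) = d - 2 ↔ n % (d - 1) = k - 1 := by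
      have hr : n % (d - 1) < d - 1 := Nat.mod_lt _ (by omega)
      rw [← Nat.add_mod_mod]
      generalize n % (d - 1) = r at *
      by_cases h : d - 1 - k + r < d - 1
      · rw [Nat.mod_eq_of_lt h]; omega
      · rw [Nat.mod_eq_sub_mod (by omega), Nat.mod_eq_of_lt (by omega)]; omega
    simp only [key]
    split_ifs <;> omega
end RichRT
end

section
/- Let d ≥ 3 and define F_0 = ε, F_i = φ(F_{i−1})0 for 1 ≤ i ≤ d−1. Then: (i) F_k·k = φ^k(0) for every 0 ≤ k ≤ d−1; (ii) φ(F_k)·0 = φ^k(0)·F_k for every 0 ≤ k ≤ d−1; (iii) φ^d(0) = φ^{d−1}(0)·φ^{d−1}(0)·(d−1); (iv) φ^k(d−1) = F_k·(d−1)(d−1)·φ(d−1)·φ^2(d−1)⋯φ^{k−1}(d−1) for every 1 ≤ k ≤ d−1. -/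
namespace RichRT

variable {A : Type*}

theorem phiW_append (d : ℕ) (a b : List ℕ) : phiW d (a ++ b) = phiW d a ++ phiW d b := by
  simp [phiW]

theorem phiW_flatMap (d : ℕ) (l : List ℕ) (f : ℕ → List ℕ) :
    phiW d (l.flatMap f) = l.flatMap (fun j => phiW d (f j)) := by
  simp [phiW, List.flatMap_assoc]

theorem phiW_last (d : ℕ) : phiW d [d - 1] = [0, d - 1, d - 1] := by
  simp [phiW, phiL]

/-- Let `d ≥ 3` and `F_0 = ε`, `F_i = φ(F_{i−1})0`. Then (i) `F_k·k = φ^k(0)`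
for `k ≤ d−1`; (ii) `φ(F_k)·0 = φ^k(0)·F_k` for `k ≤ d−1`; (iii)
`φ^d(0) = φ^{d−1}(0)·φ^{d−1}(0)·(d−1)`; (iv) for `1 ≤ k ≤ d−1`,
`φ^k(d−1) = F_k·(d−1)(d−1)·φ(d−1)·φ²(d−1)⋯φ^{k−1}(d−1)`. -/
theorem statement14 (d : ℕ) (hd : 3 ≤ d) :
    (∀ k : ℕ, k ≤ d - 1 → Fword d k ++ [k] = (phiW d)^[k] [0]) ∧
    (∀ k : ℕ, k ≤ d - 1 →
      phiW d (Fword d k) ++ [0] = (phiW d)^[k] [0] ++ Fword d k) ∧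
    ((phiW d)^[d] [0] = (phiW d)^[d - 1] [0] ++ (phiW d)^[d - 1] [0] ++ [d - 1]) ∧
    (∀ k : ℕ, 1 ≤ k → k ≤ d - 1 →
      (phiW d)^[k] [d - 1] =
        Fword d k ++ [d - 1, d - 1] ++
          (List.range (k - 1)).flatMap (fun j => (phiW d)^[j + 1] [d - 1])) := by
  have h1 : ∀ k : ℕ, k ≤ d - 1 → Fword d k ++ [k] = (phiW d)^[k] [0] := by
    intro k
    induction k with
    | zero => intro _; rfl
    | succ k ih =>
      intro hk
      have hk' : k < d - 1 := by omega
      rw [Function.iterate_succ_apply', ← ih hk'.le, phiW_append]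
      simp [Fword, phiW, phiL, hk']
  have h2 : ∀ k : ℕ, phiW d (Fword d k) ++ [0] = (phiW d)^[k] [0] ++ Fword d k := by
    intro k
    induction k with
    | zero => rfl
    | succ k ih =>
      rw [Function.iterate_succ_apply']
      have e : Fword d (k + 1) = phiW d (Fword d k) ++ [0] := rfl
      calc phiW d (Fword d (k + 1)) ++ [0]
          = phiW d ((phiW d)^[k] [0] ++ Fword d k) ++ [0] := by rw [e, ih]
        _ = _ := by rw [phiW_append, e, List.append_assoc]
  refine ⟨h1, fun k _ => h2 k, ?_, ?_⟩
  · obtain ⟨n, rfl⟩ : ∃ n, d = n + 1 := ⟨d - 1, by omega⟩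
    have e1 := h1 n (by omega)
    have e2 := h2 n
    have e3 := phiW_last (n + 1)
    simp only [Nat.add_sub_cancel] at *
    rw [Function.iterate_succ_apply']
    nth_rewrite 1 [← e1]
    nth_rewrite 2 [← e1]
    rw [phiW_append, e3]
    have : phiW (n + 1) (Fword (n + 1) n) ++ [0, n, n]
        = (phiW (n + 1) (Fword (n + 1) n) ++ [0]) ++ [n, n] := by simp
    rw [this, e2]
    simp
  · intro k hk
    induction k, hk using Nat.le_induction with
    | base => intro _; simp [Fword, phiW, phiL]
    | succ k hk ih =>
      intro hk'
      obtain ⟨m, rfl⟩ : ∃ m, k = m + 1 := ⟨k - 1, by omega⟩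
      rw [Function.iterate_succ_apply', ih (by omega)]
      have e : [d - 1, d - 1] = [d - 1] ++ [d - 1] := rfl
      have e' : Fword d (m + 1 + 1) = phiW d (Fword d (m + 1)) ++ [0] := rfl
      simp only [Nat.add_sub_cancel]
      rw [phiW_append, phiW_append, phiW_flatMap, e', List.range_succ_eq_map, e, phiW_append]
      nth_rewrite 1 [phiW_last]
      simp [List.flatMap_map, ← Function.iterate_succ_apply' (phiW d)]
end RichRT
end
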